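/- arXiv:1209.5160 — 2 statements merged into one kernel-verified Lean document; each statement's English description precedes it below -/
import Mathlib

section
/- The deletion–contraction recursion defining the Tutte polynomial is well defined: for any undirected multigraph G, the value T(G, x, y) obtained by the recursion is independent of which admissible edge e is selected at each step. In particular, for any two edges e and f of G that are neither loops nor cut-edges, T(G−e) + T(G/e) = T(G−f) + T(G/f). -/
/-!
The recursion computes the Whitney rank generating function
`W(E) = ∑_{S ⊆ E} (x-1)^(r(E)-r(S)) (y-1)^(|S|-r(S))`, whatever edges are selected; since `W` does
not mention any selection, this gives both claims at once.

The rank `r(S)` is taken to be the dimension of the span of the incidence vectors `1_u - 1_v`,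
`(u, v) ∈ S`, in `V → ℚ`. Two vertices are joined by a path in `S` exactly when the difference of
their indicators lies in this span (`reach_iff`), so adding a non-cut-edge preserves the rank and
adding a cut-edge raises it by one. Contracting a non-loop `e` corresponds to a linear map whose
kernel is the line spanned by the vector of `e`, so by rank-nullity `r(S/e) + 1 = r(S + e)`
(`rk_contract`). Splitting the subsets of `E` according to whether they contain a chosen copy of `e`
then shows that `W` satisfies the three recursion rules for every edge `e` of `E`, and induction on
the number of edges identifies any function given by the recursion with `W`.
-/

open scoped Classical

/-- Adjacency relation of a multigraph given by a multiset of (ordered) edge pairs. -/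
def adjOf {V : Type*} (E : Multiset (V × V)) (a b : V) : Prop :=
  (a, b) ∈ E ∨ (b, a) ∈ E

/-- Reachability in the multigraph with edge multiset `E`. -/
def Reach {V : Type*} (E : Multiset (V × V)) (a b : V) : Prop :=
  Relation.ReflTransGen (adjOf E) a b

/-- The multigraph with vertex type `V` and edge multiset `E` is connected. -/
def MGConnected (V : Type*) (E : Multiset (V × V)) : Prop :=
  ∀ a b : V, Reach E a b

/-- Number of connected components of the multigraph on `V` with edges `E`. -/
noncomputable def numComponents (V : Type*) (E : Multiset (V × V)) : ℕ :=
  Nat.card (Quotient (Relation.EqvGen.setoid (adjOf E)))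

/-- Rank of an edge multiset `S` over vertex type `V`: `|V| - c(S)`. -/
noncomputable def mrank (V : Type*) (S : Multiset (V × V)) : ℕ :=
  Nat.card V - numComponents V S

/-- Tutte polynomial via the Whitney rank generating function,
`T(G,x,y) = ∑_{S ⊆ E} (x-1)^(r(E)-r(S)) (y-1)^(|S|-r(S))`. -/
noncomputable def tutte (V : Type*) (E : Multiset (V × V)) (x y : ℝ) : ℝ :=
  (E.powerset.map (fun S =>
    (x - 1) ^ (mrank V E - mrank V S) * (y - 1) ^ (Multiset.card S - mrank V S))).sum

variable {V : Type*}

/-- Deletion of (one copy of) the edge `e` from the edge multiset `E`. -/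
def mdelete [DecidableEq V] (E : Multiset (V × V)) (e : V × V) : Multiset (V × V) :=
  E.erase e

/-- Contraction of the edge `e = (u,v)`: delete one copy of `e` and identify the
endpoint `v` with `u` in all remaining edges. -/
def mcontract [DecidableEq V] (E : Multiset (V × V)) (e : V × V) : Multiset (V × V) :=
  (E.erase e).map (fun p =>
    (if p.1 = e.2 then e.1 else p.1, if p.2 = e.2 then e.1 else p.2))

/-- The edge `e` is a loop. -/
def IsLoopEdge (e : V × V) : Prop := e.1 = e.2

/-- The edge `e` is a cut-edge (bridge) of the multigraph with edges `E`:
after removing (one copy of) `e` its endpoints are no longer connected. -/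
def IsCutEdge [DecidableEq V] (E : Multiset (V × V)) (e : V × V) : Prop :=
  e ∈ E ∧ ¬ Reach (E.erase e) e.1 e.2

/-- `T` is a function obtained by running the deletion–contraction recursion for the
Tutte polynomial, selecting at each step *some* edge of the graph:
`T(∅) = 1`; `T(G) = x·T(G/e)` if the selected `e` is a cut-edge; `T(G) = y·T(G−e)` if it
is a loop; and `T(G) = T(G−e) + T(G/e)` otherwise. -/
def IsDCChoice [DecidableEq V] (T : Multiset (V × V) → ℝ) (x y : ℝ) : Prop :=
  T 0 = 1 ∧
  ∀ E : Multiset (V × V), E ≠ 0 → ∃ e ∈ E,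
    (IsCutEdge E e → T E = x * T (mcontract E e)) ∧
    (IsLoopEdge e → T E = y * T (mdelete E e)) ∧
    (¬ IsLoopEdge e → ¬ IsCutEdge E e → T E = T (mdelete E e) + T (mcontract E e))

/-- The incidence vector `1_u - 1_v` of the edge `(u, v)`; it vanishes exactly on loops. -/
def edgeVec [DecidableEq V] (p : V × V) : V → ℚ :=
  Pi.single p.1 1 - Pi.single p.2 1

/-- The span of the incidence vectors of the edges in `S`: the column space of the
oriented incidence matrix. -/
def edgeSpan [DecidableEq V] (S : Multiset (V × V)) : Submodule ℚ (V → ℚ) :=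
  Submodule.span ℚ (edgeVec '' {p | p ∈ S})

/-- The rank of an edge multiset, as the dimension of the span of its incidence vectors. -/
noncomputable def rk [DecidableEq V] (S : Multiset (V × V)) : ℕ :=
  Module.finrank ℚ (edgeSpan S)

/-- The effect of contracting `e` on another edge: the endpoint `e.2` is renamed to `e.1`. -/
def ctr [DecidableEq V] (e p : V × V) : V × V :=
  (if p.1 = e.2 then e.1 else p.1, if p.2 = e.2 then e.1 else p.2)

/-- The Whitney rank generating function, with the linear-algebraic rank `rk`. -/
noncomputable def whitney [DecidableEq V] (x y : ℝ) (E : Multiset (V × V)) : ℝ :=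
  (E.powerset.map fun S =>
    (x - 1) ^ (rk E - rk S) * (y - 1) ^ (Multiset.card S - rk S)).sum

section

variable [DecidableEq V]

lemma edgeSpan_cons (e : V × V) (S : Multiset (V × V)) :
    edgeSpan (e ::ₘ S) = Submodule.span ℚ {edgeVec e} ⊔ edgeSpan S := by
  have : {p | p ∈ e ::ₘ S} = insert e {p | p ∈ S} := by ext; simp
  rw [edgeSpan, this, Set.image_insert_eq, Submodule.span_insert, edgeSpan]

lemma edgeSpan_mono {S T : Multiset (V × V)} (h : S ≤ T) : edgeSpan S ≤ edgeSpan T :=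
  Submodule.span_mono (Set.image_mono fun _ hp => Multiset.mem_of_le h hp)

/-- Path-connectedness is membership in the span. If `b` is not reachable from `a`, summing
coordinates over the component of `a` is a functional separating `1_a - 1_b` from the span. -/
lemma reach_iff [Fintype V] (S : Multiset (V × V)) (a b : V) :
    Reach S a b ↔ edgeVec (a, b) ∈ edgeSpan S := by
  constructor
  · intro h
    induction h with
    | refl => simp [edgeVec]
    | @tail c d _ hcd ih =>
      have hstep : edgeVec (c, d) ∈ edgeSpan S := by
        rcases hcd with h | h
        · exact Submodule.subset_span ⟨_, h, rfl⟩
        · have : edgeVec (c, d) = -edgeVec (d, c) := by simp [edgeVec]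
          rw [this]
          exact Submodule.neg_mem _ (Submodule.subset_span ⟨_, h, rfl⟩)
      have : edgeVec (a, d) = edgeVec (a, c) + edgeVec (c, d) := by simp [edgeVec]
      rw [this]
      exact Submodule.add_mem _ ih hstep
  · intro h
    by_contra hab
    let ℓ : (V → ℚ) →ₗ[ℚ] ℚ :=
      ∑ w : V, (if Reach S a w then (1 : ℚ) else 0) • LinearMap.proj w
    have hℓ (w : V) : ℓ (Pi.single w 1) = if Reach S a w then 1 else 0 := by
      simp only [ℓ, LinearMap.sum_apply, LinearMap.smul_apply, LinearMap.proj_apply,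
        Pi.single_apply, smul_eq_mul, mul_ite, mul_one, mul_zero]
      simp
    have hle : edgeSpan S ≤ LinearMap.ker ℓ := by
      refine Submodule.span_le.2 ?_
      rintro _ ⟨⟨c, d⟩, hp, rfl⟩
      have hcd : Reach S a c ↔ Reach S a d :=
        ⟨fun h => h.tail (Or.inl hp), fun h => h.tail (Or.inr hp)⟩
      simp [edgeVec, hℓ, hcd]
    have h0 : ℓ (edgeVec (a, b)) = 0 := hle h
    have haa : Reach S a a := Relation.ReflTransGen.refl
    simp [edgeVec, hℓ, hab, haa] at h0

lemma rk_cons_of_mem {e : V × V} {S : Multiset (V × V)} (h : edgeVec e ∈ edgeSpan S) :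
    rk (e ::ₘ S) = rk S := by
  rw [rk, edgeSpan_cons, sup_eq_right.2 ((Submodule.span_singleton_le_iff_mem _ _).2 h), rk]

lemma edgeVec_eq_zero {e : V × V} : edgeVec e = 0 ↔ IsLoopEdge e := by
  refine ⟨fun h => ?_, fun h => by simp [edgeVec, show e.1 = e.2 from h]⟩
  by_contra hne
  have := congrFun h e.1
  simp [edgeVec, show e.1 ≠ e.2 from hne] at this

lemma powerset_map_ctr (e : V × V) (F : Multiset (V × V)) :
    (F.map (ctr e)).powerset = F.powerset.map (Multiset.map (ctr e)) := by
  induction F using Multiset.induction_on with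
  | empty => simp
  | cons a F ih => simp [Multiset.powerset_cons, ih, Multiset.map_map]

variable [Fintype V]

lemma rk_mono {S T : Multiset (V × V)} (h : S ≤ T) : rk S ≤ rk T :=
  Submodule.finrank_mono (edgeSpan_mono h)

lemma rk_cons_of_notMem {e : V × V} {S : Multiset (V × V)} (h : edgeVec e ∉ edgeSpan S) :
    rk (e ::ₘ S) = rk S + 1 := by
  have h0 : edgeVec e ≠ 0 := fun h0 => h (h0 ▸ Submodule.zero_mem _)
  have hd : Submodule.span ℚ {edgeVec e} ⊓ edgeSpan S = ⊥ :=
    ((Submodule.disjoint_span_singleton' h0).2 h).symm.eq_bot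
  have := Submodule.finrank_sup_add_finrank_inf_eq (Submodule.span ℚ {edgeVec e}) (edgeSpan S)
  rw [hd, finrank_bot, finrank_span_singleton h0, ← edgeSpan_cons] at this
  simp only [rk]
  omega

lemma rk_le_card (S : Multiset (V × V)) : rk S ≤ Multiset.card S := by
  induction S using Multiset.induction_on with
  | empty =>
    have : {p : V × V | p ∈ (0 : Multiset (V × V))} = ∅ := by ext; simp
    rw [rk, edgeSpan, this, Set.image_empty, Submodule.span_empty, finrank_bot]
    exact Nat.zero_le _
  | cons e S ih =>
    rw [Multiset.card_cons]
    by_cases h : edgeVec e ∈ edgeSpan S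
    · rw [rk_cons_of_mem h]; omega
    · rw [rk_cons_of_notMem h]; omega

/-- Contraction lowers the rank of `S + e` by exactly one: the linear map induced by the vertex
identification maps the span of `S + e` onto that of `S/e`, with kernel the line of `e`. -/
lemma rk_contract {e : V × V} (he : ¬ IsLoopEdge e) (S : Multiset (V × V)) :
    rk (e ::ₘ S) = rk (S.map (ctr e)) + 1 := by
  have h0 : edgeVec e ≠ 0 := fun h => he (edgeVec_eq_zero.1 h)
  let φ : (V → ℚ) →ₗ[ℚ] (V → ℚ) :=
    LinearMap.id + (LinearMap.proj e.2 : (V → ℚ) →ₗ[ℚ] ℚ).smulRight (edgeVec e)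
  have hφ (f : V → ℚ) : φ f = f + f e.2 • edgeVec e := by simp [φ]
  have hsingle (w : V) :
      φ (Pi.single w 1) = Pi.single (if w = e.2 then e.1 else w) 1 := by
    rw [hφ]
    by_cases hw : w = e.2
    · subst hw; simp [edgeVec]
    · simp [hw, Ne.symm hw]
  have hvec (p : V × V) : φ (edgeVec p) = edgeVec (ctr e p) := by
    simp only [edgeVec, map_sub, hsingle, ctr]
  have hφe : φ (edgeVec e) = 0 := by
    rw [hvec, edgeVec_eq_zero]
    simp [ctr, IsLoopEdge]
  have hker : LinearMap.ker φ = Submodule.span ℚ {edgeVec e} := by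
    apply le_antisymm
    · intro f hf
      rw [LinearMap.mem_ker, hφ] at hf
      exact Submodule.mem_span_singleton.2 ⟨-f e.2, by
        rw [neg_smul]; exact (eq_neg_of_add_eq_zero_left hf).symm⟩
    · exact (Submodule.span_singleton_le_iff_mem _ _).2 hφe
  have hmap : (edgeSpan (e ::ₘ S)).map φ = edgeSpan (S.map (ctr e)) := by
    have h1 : (edgeSpan S).map φ = edgeSpan (S.map (ctr e)) := by
      rw [edgeSpan, Submodule.map_span, edgeSpan]
      congr 1
      ext f
      simp only [Set.mem_image, Set.mem_ofPred_eq, Multiset.mem_map]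
      constructor
      · rintro ⟨_, ⟨p, hp, rfl⟩, rfl⟩
        exact ⟨_, ⟨p, hp, rfl⟩, (hvec p).symm⟩
      · rintro ⟨_, ⟨p, hp, rfl⟩, rfl⟩
        exact ⟨_, ⟨p, hp, rfl⟩, hvec p⟩
    rw [edgeSpan_cons, Submodule.map_sup, h1, Submodule.map_span, Set.image_singleton, hφe]
    simp
  have hle : LinearMap.ker φ ≤ edgeSpan (e ::ₘ S) := by
    rw [hker, edgeSpan_cons]; exact le_sup_left
  have := (φ.domRestrict (edgeSpan (e ::ₘ S))).finrank_range_add_finrank_ker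
  rw [LinearMap.range_domRestrict, hmap, LinearMap.ker_domRestrict,
    (Submodule.comapSubtypeEquivOfLe hle).finrank_eq, hker, finrank_span_singleton h0] at this
  exact this.symm

lemma isCutEdge_cons {e : V × V} {F : Multiset (V × V)} :
    IsCutEdge (e ::ₘ F) e ↔ edgeVec e ∉ edgeSpan F := by
  simp [IsCutEdge, reach_iff]

/-- The subsets of `F + e` avoiding the distinguished copy of `e` contribute the first sum. For a
non-loop, those containing it contribute the Whitney function of the contraction. -/
lemma whitney_cons {e : V × V} (he : ¬ IsLoopEdge e) (x y : ℝ) (F : Multiset (V × V)) :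
    whitney x y (e ::ₘ F) =
      (F.powerset.map fun S =>
        (x - 1) ^ (rk (e ::ₘ F) - rk S) * (y - 1) ^ (Multiset.card S - rk S)).sum +
      whitney x y (F.map (ctr e)) := by
  rw [whitney, Multiset.powerset_cons, Multiset.map_add, Multiset.sum_add, Multiset.map_map,
    whitney, powerset_map_ctr, Multiset.map_map]
  simp only [Function.comp_def, rk_contract he, Multiset.card_cons, Multiset.card_map,
    Nat.add_sub_add_right]

lemma whitney_loop {e : V × V} (he : IsLoopEdge e) (x y : ℝ) (F : Multiset (V × V)) :
    whitney x y (e ::ₘ F) = y * whitney x y F := by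
  have hrk (S : Multiset (V × V)) : rk (e ::ₘ S) = rk S :=
    rk_cons_of_mem (by rw [edgeVec_eq_zero.2 he]; exact Submodule.zero_mem _)
  have hterm (S : Multiset (V × V)) :
      (x - 1) ^ (rk F - rk S) * (y - 1) ^ (Multiset.card S + 1 - rk S) =
      (y - 1) * ((x - 1) ^ (rk F - rk S) * (y - 1) ^ (Multiset.card S - rk S)) := by
    rw [Nat.sub_add_comm (rk_le_card S), pow_succ]; ring
  rw [whitney, Multiset.powerset_cons, Multiset.map_add, Multiset.sum_add, Multiset.map_map]
  simp only [Function.comp_def, hrk, Multiset.card_cons, hterm, Multiset.sum_map_mul_left]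
  rw [whitney]; ring

lemma whitney_not_cut {e : V × V} {F : Multiset (V × V)} (he : ¬ IsLoopEdge e)
    (hc : ¬ IsCutEdge (e ::ₘ F) e) (x y : ℝ) :
    whitney x y (e ::ₘ F) = whitney x y F + whitney x y (F.map (ctr e)) := by
  rw [whitney_cons he, rk_cons_of_mem (not_not.1 (mt isCutEdge_cons.2 hc)), ← whitney]

/-- For a cut-edge, deletion and contraction have the same rank function on subsets of `F`, so the
subsets avoiding `e` contribute `x - 1` times those containing it. -/
lemma whitney_cut {e : V × V} {F : Multiset (V × V)} (hc : IsCutEdge (e ::ₘ F) e) (x y : ℝ) :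
    whitney x y (e ::ₘ F) = x * whitney x y (F.map (ctr e)) := by
  have hF : edgeVec e ∉ edgeSpan F := isCutEdge_cons.1 hc
  have he : ¬ IsLoopEdge e := fun h =>
    hF (by rw [edgeVec_eq_zero.2 h]; exact Submodule.zero_mem _)
  have hrk {S : Multiset (V × V)} (hS : S ≤ F) : rk (S.map (ctr e)) = rk S := by
    have h1 := rk_contract he S
    rw [rk_cons_of_notMem fun h => hF (edgeSpan_mono hS h)] at h1
    omega
  have hsum : (F.powerset.map fun S =>
        (x - 1) ^ (rk (e ::ₘ F) - rk S) * (y - 1) ^ (Multiset.card S - rk S)).sum =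
      (x - 1) * whitney x y (F.map (ctr e)) := by
    rw [whitney, powerset_map_ctr, Multiset.map_map, ← Multiset.sum_map_mul_left]
    congr 1
    refine Multiset.map_congr rfl fun S hS => ?_
    have hS : S ≤ F := Multiset.mem_powerset.1 hS
    simp only [Function.comp_def, hrk hS, hrk le_rfl, Multiset.card_map,
      rk_cons_of_notMem hF]
    rw [Nat.sub_add_comm (rk_mono hS), pow_succ]; ring
  rw [whitney_cons he, hsum]; ring

/-- Every edge selection computes the Whitney function. -/
lemma IsDCChoice.eq_whitney {T : Multiset (V × V) → ℝ} {x y : ℝ} (h : IsDCChoice T x y)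
    (E : Multiset (V × V)) : T E = whitney x y E := by
  induction hn : Multiset.card E using Nat.strong_induction_on generalizing E with
  | _ n ih =>
    by_cases hE : E = 0
    · subst hE
      simp [h.1, whitney]
    obtain ⟨e, he, hcut, hloop, hgen⟩ := h.2 E hE
    obtain ⟨F, rfl⟩ := Multiset.exists_cons_of_mem he
    rw [Multiset.card_cons] at hn
    have hd : mdelete (e ::ₘ F) e = F := by simp [mdelete]
    have hk : mcontract (e ::ₘ F) e = F.map (ctr e) := by
      rw [mcontract, Multiset.erase_cons_head]; rfl
    rw [hk] at hcut hgen
    rw [hd] at hloop hgen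
    have ihd : T F = whitney x y F := ih _ (by omega) F rfl
    have ihk : T (F.map (ctr e)) = whitney x y (F.map (ctr e)) :=
      ih _ (by omega) _ (Multiset.card_map _ _)
    by_cases hl : IsLoopEdge e
    · rw [hloop hl, whitney_loop hl, ihd]
    by_cases hc : IsCutEdge (e ::ₘ F) e
    · rw [hcut hc, whitney_cut hc, ihk]
    · rw [hgen hl hc, whitney_not_cut hl hc, ihd, ihk]

lemma whitney_delete_add_contract {E : Multiset (V × V)} {e : V × V} (he : e ∈ E)
    (hl : ¬ IsLoopEdge e) (hc : ¬ IsCutEdge E e) (x y : ℝ) :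
    whitney x y (mdelete E e) + whitney x y (mcontract E e) = whitney x y E := by
  obtain ⟨F, rfl⟩ := Multiset.exists_cons_of_mem he
  rw [whitney_not_cut hl hc, mdelete, mcontract, Multiset.erase_cons_head]
  rfl

end

/-- **Well-definedness of the deletion–contraction recursion.**  Any two functions
obtained by running the recursion (with possibly different admissible edge selections
at each step) coincide; in particular, for any two edges `e` and `f` of `G` that are
neither loops nor cut-edges, `T(G−e) + T(G/e) = T(G−f) + T(G/f)`. -/
theorem tutte_recursion_well_defined [Fintype V] [DecidableEq V] (x y : ℝ)
    (T₁ T₂ : Multiset (V × V) → ℝ)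
    (h₁ : IsDCChoice T₁ x y) (h₂ : IsDCChoice T₂ x y) :
    T₁ = T₂ ∧
    ∀ (E : Multiset (V × V)) (e f : V × V), e ∈ E → f ∈ E →
      ¬ IsLoopEdge e → ¬ IsCutEdge E e → ¬ IsLoopEdge f → ¬ IsCutEdge E f →
      T₁ (mdelete E e) + T₁ (mcontract E e) = T₁ (mdelete E f) + T₁ (mcontract E f) := by
  refine ⟨funext fun E => by rw [h₁.eq_whitney, h₂.eq_whitney], ?_⟩
  intro E e f he hf hle hce hlf hcf
  simp only [h₁.eq_whitney]
  rw [whitney_delete_add_contract he hle hce, whitney_delete_add_contract hf hlf hcf]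
end

section
/- Let G be a connected undirected multigraph with n vertices. Then the chromatic polynomial of G satisfies P_λ(G) = (−1)^{n−1} · λ · T(G, 1−λ, 0), where T is the Tutte polynomial of G. -/
/-!
The proof goes through Whitney's subset expansion
`P_λ(G) = ∑_{S ⊆ E} (-1)^|S| λ^c(S)`.
The indicator that a map `f` is a proper coloring is `∏_{e ∈ E} (1 - [f is constant on e])`;
expanding this product over the sub-multisets of `E` (`prod_one_sub`) and summing over `f` leaves,
for each `S`, the number of maps constant on the edges of `S`, which are the maps out of the set of
components, so there are `λ^c(S)` of them (`card_const`).

For connected `G` the `S`-term of the rank generating function at `x = 1 - λ`, `y = 0` is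
`(-λ)^(c(S)-1) (-1)^(|S|-r(S))`, so the two expansions agree term by term once the subtractions in
the exponents are known not to truncate: `1 ≤ c(S) ≤ n` and `n ≤ c(S) + |S|`. The last inequality
holds because adding an edge merges at most two components (`numComponents_le_cons`).
-/

open scoped Classical

/-- The number of proper colorings of the multigraph on `V` with edge multiset `E`
using `c` colors: colorings assigning distinct colors to the endpoints of every edge
(so it is `0` whenever `E` contains a loop). -/
noncomputable def properColorings (V : Type*) (E : Multiset (V × V)) (c : ℕ) : ℕ :=
  Nat.card {f : V → Fin c // ∀ e ∈ E, f e.1 ≠ f e.2}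

theorem prod_one_sub {α : Type*} (g : α → ℝ) (E : Multiset α) :
    (E.map (fun e => 1 - g e)).prod =
      (E.powerset.map (fun S => (-1) ^ (Multiset.card S) * (S.map g).prod)).sum := by
  induction E using Multiset.induction_on with
  | empty => simp
  | cons a E ih =>
    simp only [Multiset.map_cons, Multiset.prod_cons, ih, Multiset.powerset_cons,
      Multiset.map_add, Multiset.sum_add, Multiset.map_map, Function.comp_def,
      Multiset.card_cons]
    rw [sub_mul, one_mul, sub_eq_add_neg, ← neg_mul, ← Multiset.sum_map_mul_left]
    congr 3
    funext S
    ring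

theorem const_of_eqvGen {V C : Type*} {S : Multiset (V × V)} {f : V → C}
    (hf : ∀ e ∈ S, f e.1 = f e.2) {a b : V} (h : Relation.EqvGen (adjOf S) a b) :
    f a = f b := by
  induction h with
  | rel x y h => exact h.elim (fun h => hf _ h) (fun h => (hf _ h).symm)
  | refl => rfl
  | symm _ _ _ ih => exact ih.symm
  | trans _ _ _ _ _ ih1 ih2 => exact ih1.trans ih2

/-- Maps constant on every edge of `S` are the maps out of the set of components of `S`. -/
theorem card_const (V : Type*) [Fintype V] (S : Multiset (V × V)) (c : ℕ) :
    Nat.card {f : V → Fin c // ∀ e ∈ S, f e.1 = f e.2} = c ^ numComponents V S := by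
  let e : {f : V → Fin c // ∀ e ∈ S, f e.1 = f e.2} ≃
      (Quotient (Relation.EqvGen.setoid (adjOf S)) → Fin c) :=
    { toFun := fun f => Quotient.lift f.1 (fun _ _ h => const_of_eqvGen f.2 h)
      invFun := fun g => ⟨fun v => g (Quotient.mk _ v), fun e he =>
        congrArg g (Quotient.sound (Relation.EqvGen.rel _ _ (Or.inl he)))⟩
      left_inv := fun f => rfl
      right_inv := fun g => by
        funext q
        induction q using Quotient.inductionOn with
        | h v => rfl }
  rw [Nat.card_congr e, Nat.card_fun, Nat.card_fin, numComponents]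

theorem prod_ite_one_zero {α : Type*} (p : α → Prop) [DecidablePred p] (S : Multiset α)
    [Decidable (∀ e ∈ S, p e)] :
    (S.map (fun e => if p e then (1 : ℝ) else 0)).prod = if ∀ e ∈ S, p e then 1 else 0 := by
  split_ifs with h
  · refine Multiset.prod_eq_one fun x hx => ?_
    obtain ⟨e, he, rfl⟩ := Multiset.mem_map.1 hx
    exact if_pos (h e he)
  · push Not at h
    obtain ⟨e, he, hp⟩ := h
    exact Multiset.prod_eq_zero (Multiset.mem_map.2 ⟨e, he, if_neg hp⟩)

theorem sum_indicator {α : Type*} [Fintype α] (p : α → Prop) [DecidablePred p] :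
    ∑ f : α, (if p f then (1 : ℝ) else 0) = (Nat.card {f // p f} : ℝ) := by
  rw [Finset.sum_boole, Nat.card_eq_fintype_card, Fintype.card_subtype]

theorem sum_multiset_comm {α β : Type*} (s : Finset α) (P : Multiset β) (F : α → β → ℝ) :
    ∑ f ∈ s, (P.map (F f)).sum = (P.map (fun S => ∑ f ∈ s, F f S)).sum := by
  induction P using Multiset.induction_on with
  | empty => simp
  | cons a P ih => simp [Finset.sum_add_distrib, ih]

/-- Whitney's subset expansion of the chromatic polynomial. -/
theorem whitney_s4 (V : Type*) [Fintype V] (E : Multiset (V × V)) (c : ℕ) :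
    (properColorings V E c : ℝ) =
      (E.powerset.map (fun S => (-1) ^ (Multiset.card S) * (c : ℝ) ^ numComponents V S)).sum := by
  have key : ∀ f : V → Fin c, (if ∀ e ∈ E, f e.1 ≠ f e.2 then (1 : ℝ) else 0) =
      (E.powerset.map (fun S => (-1) ^ (Multiset.card S) *
        (if ∀ e ∈ S, f e.1 = f e.2 then (1 : ℝ) else 0))).sum := by
    intro f
    simp_rw [← prod_ite_one_zero (fun e : V × V => f e.1 = f e.2)]
    rw [← prod_one_sub, ← prod_ite_one_zero (fun e : V × V => f e.1 ≠ f e.2)]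
    congr 2
    funext e
    by_cases h : f e.1 = f e.2 <;> simp [h]
  rw [properColorings, ← sum_indicator, Finset.sum_congr rfl (fun f _ => key f),
    sum_multiset_comm]
  congr 2
  funext S
  rw [← Finset.mul_sum, sum_indicator, card_const, Nat.cast_pow]

/-- A new edge `e` can only identify vertices in the old components of its two endpoints. -/
theorem eqvGen_cons {V : Type*} {S : Multiset (V × V)} {e : V × V} {u v : V}
    (h : Relation.EqvGen (adjOf (e ::ₘ S)) u v) :
    Relation.EqvGen (adjOf S) u v ∨
      ((Relation.EqvGen (adjOf S) u e.1 ∨ Relation.EqvGen (adjOf S) u e.2) ∧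
        (Relation.EqvGen (adjOf S) v e.1 ∨ Relation.EqvGen (adjOf S) v e.2)) := by
  induction h with
  | rel x y h =>
    simp only [adjOf, Multiset.mem_cons] at h
    rcases h with (rfl | h) | (rfl | h)
    · exact Or.inr ⟨Or.inl (.refl _), Or.inr (.refl _)⟩
    · exact Or.inl (.rel _ _ (Or.inl h))
    · exact Or.inr ⟨Or.inr (.refl _), Or.inl (.refl _)⟩
    · exact Or.inl (.rel _ _ (Or.inr h))
  | refl x => exact Or.inl (.refl _)
  | symm x y _ ih => exact ih.imp (fun h => .symm _ _ h) And.symm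
  | trans x y z _ _ ih1 ih2 =>
    rcases ih1 with h1 | ⟨h1, h1'⟩
    · rcases ih2 with h2 | ⟨h2, h2'⟩
      · exact Or.inl (.trans _ _ _ h1 h2)
      · exact Or.inr ⟨h2.imp (.trans _ _ _ h1) (.trans _ _ _ h1), h2'⟩
    · rcases ih2 with h2 | ⟨h2, h2'⟩
      · have h2s := Relation.EqvGen.symm _ _ h2
        exact Or.inr ⟨h1, h1'.imp (.trans _ _ _ h2s) (.trans _ _ _ h2s)⟩
      · exact Or.inr ⟨h1, h2'⟩

theorem numComponents_le_cons (V : Type*) [Fintype V] (S : Multiset (V × V)) (e : V × V) :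
    numComponents V S ≤ numComponents V (e ::ₘ S) + 1 := by
  have mono : ∀ u v, Relation.EqvGen (adjOf S) u v → Relation.EqvGen (adjOf (e ::ₘ S)) u v :=
    Relation.EqvGen.mono (fun a b h =>
      Or.imp (fun h => Multiset.mem_cons_of_mem h) (fun h => Multiset.mem_cons_of_mem h) h)
  let s := Relation.EqvGen.setoid (adjOf S)
  let t := Relation.EqvGen.setoid (adjOf (e ::ₘ S))
  let π : Quotient s → Quotient t := Quotient.map' id mono
  -- Singling out the component of `e.1` makes the projection to the new components injective.
  let F : Quotient s → Option (Quotient t) := fun q =>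
    if q = Quotient.mk s e.1 then none else some (π q)
  have hF : Function.Injective F := by
    intro q r h
    by_cases hq : q = Quotient.mk s e.1 <;> by_cases hr : r = Quotient.mk s e.1
    · rw [hq, hr]
    · simp [F, hq, hr] at h
    · simp [F, hq, hr] at h
    · simp only [F, hq, hr, if_false, Option.some.injEq] at h
      induction q using Quotient.inductionOn with
      | h u =>
      induction r using Quotient.inductionOn with
      | h v =>
      have huv : Relation.EqvGen (adjOf (e ::ₘ S)) u v := Quotient.exact h
      rcases eqvGen_cons huv with h | ⟨hu, hv⟩
      · exact Quotient.sound h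
      · have hu' := hu.resolve_left (fun h => hq (Quotient.sound h))
        have hv' := hv.resolve_left (fun h => hr (Quotient.sound h))
        exact Quotient.sound (Relation.EqvGen.trans _ _ _ hu' (.symm _ _ hv'))
  calc numComponents V S ≤ Nat.card (Option (Quotient t)) := Nat.card_le_card_of_injective F hF
    _ = numComponents V (e ::ₘ S) + 1 := Finite.card_option

theorem card_le_numComponents_add (V : Type*) [Fintype V] (S : Multiset (V × V)) :
    Nat.card V ≤ numComponents V S + Multiset.card S := by
  induction S using Multiset.induction_on with
  | empty =>
    refine Nat.card_le_card_of_injective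
      (Quotient.mk (Relation.EqvGen.setoid (adjOf (0 : Multiset (V × V))))) ?_
    intro a b h
    exact const_of_eqvGen (f := id) (S := 0) (by simp) (Quotient.exact h)
  | cons e S ih =>
    have := numComponents_le_cons V S e
    rw [Multiset.card_cons]
    omega

theorem numComponents_le (V : Type*) [Fintype V] (S : Multiset (V × V)) :
    numComponents V S ≤ Nat.card V :=
  Nat.card_le_card_of_surjective (Quotient.mk _) Quotient.mk_surjective

theorem numComponents_pos (V : Type*) [Fintype V] [Nonempty V] (S : Multiset (V × V)) :
    0 < numComponents V S :=
  have : Nonempty (Quotient (Relation.EqvGen.setoid (adjOf S))) :=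
    (inferInstance : Nonempty V).map (Quotient.mk _)
  Nat.card_pos

theorem numComponents_eq_one (V : Type*) [Nonempty V] (E : Multiset (V × V))
    (h : MGConnected V E) : numComponents V E = 1 := by
  rw [numComponents, Nat.card_eq_one_iff_unique]
  refine ⟨⟨fun q r => ?_⟩, (inferInstance : Nonempty V).map (Quotient.mk _)⟩
  induction q using Quotient.inductionOn with
  | h u =>
  induction r using Quotient.inductionOn with
  | h v =>
    refine Quotient.sound ?_
    change Relation.EqvGen _ u v
    have huv := h u v
    rw [Reach] at huv
    induction huv with
    | refl => exact .refl _
    | tail _ hbc ih => exact .trans _ _ _ ih (.rel _ _ hbc)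

/-- For a connected multigraph `G` with `n` vertices,
`P_λ(G) = (-1)^(n-1) · λ · T(G, 1-λ, 0)`. -/
theorem chromatic_eq_tutte (V : Type*) [Fintype V] [Nonempty V]
    (E : Multiset (V × V)) (hconn : MGConnected V E) (lam : ℕ) :
    (properColorings V E lam : ℝ) =
      (-1) ^ (Nat.card V - 1) * (lam : ℝ) * tutte V E (1 - (lam : ℝ)) 0 := by
  rw [whitney_s4, tutte, ← Multiset.sum_map_mul_left]
  congr 2
  funext S
  have h1 := card_le_numComponents_add V S
  have h2 := numComponents_le V S
  have h3 := numComponents_pos V S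
  simp only [mrank, numComponents_eq_one V E hconn]
  obtain ⟨k, hk⟩ : ∃ k, numComponents V S = k + 1 := ⟨_, (Nat.sub_add_cancel h3).symm⟩
  obtain ⟨r, hr⟩ := Nat.exists_eq_add_of_le h2
  obtain ⟨m, hm⟩ : ∃ m, Multiset.card S = r + m := ⟨_, (Nat.add_sub_of_le (by omega)).symm⟩
  have e1 : Nat.card V - 1 = k + r := by omega
  have e2 : Nat.card V - numComponents V S = r := by omega
  rw [e2, e1, hk, hm, Nat.add_sub_cancel, Nat.add_sub_cancel_left]
  have hs : ((-1 : ℝ) ^ k) * (-1) ^ k = 1 := by rw [← mul_pow]; simp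
  rw [show (1 - (lam : ℝ) - 1) = (-1) * lam by ring, mul_pow, zero_sub, pow_add, pow_add, pow_succ]
  linear_combination (-((-1 : ℝ) ^ r * (-1) ^ m * lam ^ k * lam)) * hs
end
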